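/- Let F be a field of characteristic zero, m ≥ 2, and n = 2q an even integer with q ≥ 1. Then there exist subsuperalgebras A and B of M_{n,m}(F)^{(+)} such that A is isomorphic as a superalgebra to osp(m, n/2), B is isomorphic as a superalgebra to M_{m−1,n}(F)^{(+)}, and M_{n,m}(F)^{(+)} = A + B (as vector spaces). -/

import Mathlib

open Matrix

namespace SJ

section SuperDefs

variable {F : Type*} [Field F] {J : Type*} [AddCommGroup J] [Module F J]

/-- A graded subspace: `A = (A ∩ J₀) ⊕ (A ∩ J₁)`. -/
def IsGradedG (ev od : Submodule F J) (A : Submodule F J) : Prop :=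
  A = (A ⊓ ev) ⊔ (A ⊓ od)

/-- A subsuperalgebra: a graded subspace closed under the product. -/
def IsSubalgG (mul : J → J → J) (ev od : Submodule F J) (A : Submodule F J) : Prop :=
  IsGradedG ev od A ∧ ∀ x ∈ A, ∀ y ∈ A, mul x y ∈ A

/-- Nontrivial: `A ∩ J₁ ≠ {0}`. -/
def NontrivG (od : Submodule F J) (A : Submodule F J) : Prop := A ⊓ od ≠ ⊥

/-- Simple: `A∘A ≠ 0` and the only graded subspaces `I ⊆ A` with `A∘I ⊆ I` are `0` and `A`. -/
def IsSimpleG (mul : J → J → J) (ev od : Submodule F J) (A : Submodule F J) : Prop :=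
  (∃ x ∈ A, ∃ y ∈ A, mul x y ≠ 0) ∧
  ∀ I : Submodule F J, I ≤ A → IsGradedG ev od I →
    (∀ x ∈ A, ∀ y ∈ I, mul x y ∈ I) → I = ⊥ ∨ I = A

/-- An isomorphism of superalgebras: an F-linear bijection mapping even part onto even
part, odd part onto odd part, and preserving the product. -/
def SuperIsoG {J₂ : Type*} [AddCommGroup J₂] [Module F J₂]
    (mul₁ : J → J → J) (ev₁ od₁ : Submodule F J)
    (mul₂ : J₂ → J₂ → J₂) (ev₂ od₂ : Submodule F J₂)
    (A : Submodule F J) (B : Submodule F J₂) : Prop :=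
  ∃ e : A ≃ₗ[F] B,
    (∀ x : A, (x : J) ∈ ev₁ ↔ (e x : J₂) ∈ ev₂) ∧
    (∀ x : A, (x : J) ∈ od₁ ↔ (e x : J₂) ∈ od₂) ∧
    ∀ x y z : A, mul₁ x y = (z : J) → mul₂ (e x) (e y) = (e z : J₂)

end SuperDefs

/-- The space of (n+m)×(n+m) matrices, indices split into even (`inl`) and odd (`inr`) ones. -/
abbrev MJ (F : Type*) [Field F] (n m : ℕ) :=
  Matrix (Fin n ⊕ Fin m) (Fin n ⊕ Fin m) F

/-- Parity of an index. -/
def pty {n m : ℕ} : Fin n ⊕ Fin m → Bool := Sum.elim (fun _ => false) (fun _ => true)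

variable (F : Type*) [Field F]

/-- The odd component of a matrix (block-antidiagonal part). -/
def oddPart {n m : ℕ} (X : MJ F n m) : MJ F n m :=
  Matrix.of fun i j => if pty i = pty j then 0 else X i j

/-- The even component of a matrix (block-diagonal part). -/
def evenPart {n m : ℕ} (X : MJ F n m) : MJ F n m :=
  Matrix.of fun i j => if pty i = pty j then X i j else 0

variable {F}

/-- The super-Jordan product on `M_{n,m}(F)^{(+)}`:  `x∘y = (xy+yx)/2` when `x` or `y` is
even and `x∘y = (xy−yx)/2` when both are odd, extended bilinearly.  (For arbitrary
matrices this bilinear extension equals `(xy+yx)/2 − y₁x₁` where `x₁, y₁` are the odd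
components.) -/
def jmul {n m : ℕ} (X Y : MJ F n m) : MJ F n m :=
  (2 : F)⁻¹ • (X * Y + Y * X) - oddPart F Y * oddPart F X

variable (F)

/-- The even part `J₀` of `M_{n,m}(F)^{(+)}`: block-diagonal matrices. -/
def evenSub (n m : ℕ) : Submodule F (MJ F n m) where
  carrier := {X | ∀ i j, pty i ≠ pty j → X i j = 0}
  zero_mem' := by intro i j _; simp
  add_mem' := by
    intro a b ha hb i j h
    simp only [Matrix.add_apply, ha i j h, hb i j h, add_zero]
  smul_mem' := by
    intro c a ha i j h
    simp only [Matrix.smul_apply, ha i j h, smul_zero]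

/-- The odd part `J₁` of `M_{n,m}(F)^{(+)}`: block-antidiagonal matrices. -/
def oddSub (n m : ℕ) : Submodule F (MJ F n m) where
  carrier := {X | ∀ i j, pty i = pty j → X i j = 0}
  zero_mem' := by intro i j _; simp
  add_mem' := by
    intro a b ha hb i j h
    simp only [Matrix.add_apply, ha i j h, hb i j h, add_zero]
  smul_mem' := by
    intro c a ha i j h
    simp only [Matrix.smul_apply, ha i j h, smul_zero]

/-- Statements about `M_{n,m}(F)^{(+)}` specialized from the generic definitions. -/
abbrev IsGraded {n m : ℕ} (A : Submodule F (MJ F n m)) : Prop :=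
  IsGradedG (evenSub F n m) (oddSub F n m) A

abbrev IsSubalg {n m : ℕ} (A : Submodule F (MJ F n m)) : Prop :=
  IsSubalgG jmul (evenSub F n m) (oddSub F n m) A

abbrev Nontriv {n m : ℕ} (A : Submodule F (MJ F n m)) : Prop :=
  NontrivG (oddSub F n m) A

abbrev IsSimple {n m : ℕ} (A : Submodule F (MJ F n m)) : Prop :=
  IsSimpleG jmul (evenSub F n m) (oddSub F n m) A

abbrev SuperIso {n₁ m₁ n₂ m₂ : ℕ}
    (A : Submodule F (MJ F n₁ m₁)) (B : Submodule F (MJ F n₂ m₂)) : Prop :=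
  SuperIsoG jmul (evenSub F n₁ m₁) (oddSub F n₁ m₁)
    jmul (evenSub F n₂ m₂) (oddSub F n₂ m₂) A B

/-- The standard symplectic matrix `S = [[0, I_q],[−I_q, 0]]` of size `2q`. -/
def SMat (q : ℕ) : Matrix (Fin (2 * q)) (Fin (2 * q)) F :=
  Matrix.of fun i j =>
    if (j : ℕ) = (i : ℕ) + q then (1 : F) else if (i : ℕ) = (j : ℕ) + q then -1 else 0

/-- `osp(p,q)`: block matrices `[[A, C],[S⁻¹Cᵀ, D]]` inside `M_{p,2q}(F)^{(+)}` with
`A` symmetric, `C` arbitrary and `Dᵀ S = S D`.  The condition on the lower-left block is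
recorded in the equivalent form `S · C₂₁ = C₁₂ᵀ`. -/
def ospSub (p q : ℕ) : Submodule F (MJ F p (2 * q)) where
  carrier := {X | (X.toBlocks₁₁)ᵀ = X.toBlocks₁₁ ∧
    SMat F q * X.toBlocks₂₁ = (X.toBlocks₁₂)ᵀ ∧
    (X.toBlocks₂₂)ᵀ * SMat F q = SMat F q * X.toBlocks₂₂}
  zero_mem' := by
    refine ⟨?_, ?_, ?_⟩ <;> ext i j <;>
      simp [Matrix.toBlocks₁₁, Matrix.toBlocks₁₂, Matrix.toBlocks₂₁, Matrix.toBlocks₂₂,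
        Matrix.mul_apply]
  add_mem' := by
    rintro a b ⟨ha1, ha2, ha3⟩ ⟨hb1, hb2, hb3⟩
    have e11 : (a + b).toBlocks₁₁ = a.toBlocks₁₁ + b.toBlocks₁₁ := rfl
    have e12 : (a + b).toBlocks₁₂ = a.toBlocks₁₂ + b.toBlocks₁₂ := rfl
    have e21 : (a + b).toBlocks₂₁ = a.toBlocks₂₁ + b.toBlocks₂₁ := rfl
    have e22 : (a + b).toBlocks₂₂ = a.toBlocks₂₂ + b.toBlocks₂₂ := rfl
    refine ⟨?_, ?_, ?_⟩
    · rw [e11, Matrix.transpose_add, ha1, hb1]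
    · rw [e21, e12, Matrix.mul_add, Matrix.transpose_add, ha2, hb2]
    · rw [e22, Matrix.transpose_add, Matrix.add_mul, Matrix.mul_add, ha3, hb3]
  smul_mem' := by
    rintro c a ⟨ha1, ha2, ha3⟩
    have e11 : (c • a).toBlocks₁₁ = c • a.toBlocks₁₁ := rfl
    have e12 : (c • a).toBlocks₁₂ = c • a.toBlocks₁₂ := rfl
    have e21 : (c • a).toBlocks₂₁ = c • a.toBlocks₂₁ := rfl
    have e22 : (c • a).toBlocks₂₂ = c • a.toBlocks₂₂ := rfl
    refine ⟨?_, ?_, ?_⟩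
    · rw [e11, Matrix.transpose_smul, ha1]
    · rw [e21, e12, Matrix.mul_smul, Matrix.transpose_smul, ha2]
    · rw [e22, Matrix.transpose_smul, Matrix.smul_mul, Matrix.mul_smul, ha3]

/-- `Q(n)`: matrices `[[A, B],[B, A]]` inside `M_{n,n}(F)^{(+)}`. -/
def QSub (n : ℕ) : Submodule F (MJ F n n) where
  carrier := {X | (∀ i j, X (Sum.inr i) (Sum.inr j) = X (Sum.inl i) (Sum.inl j)) ∧
    (∀ i j, X (Sum.inr i) (Sum.inl j) = X (Sum.inl i) (Sum.inr j))}
  zero_mem' := by constructor <;> intro i j <;> simp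
  add_mem' := by
    rintro a b ⟨ha1, ha2⟩ ⟨hb1, hb2⟩
    constructor <;> intro i j <;>
      simp only [Matrix.add_apply, ha1 i j, ha2 i j, hb1 i j, hb2 i j]
  smul_mem' := by
    rintro c a ⟨ha1, ha2⟩
    constructor <;> intro i j <;>
      simp only [Matrix.smul_apply, ha1 i j, ha2 i j]

/-- `P(n)`: matrices `[[A, B],[C, Aᵀ]]` with `B` symmetric and `C` skew-symmetric,
inside `M_{n,n}(F)^{(+)}`. -/
def PSub (n : ℕ) : Submodule F (MJ F n n) where
  carrier := {X | (∀ i j, X (Sum.inr i) (Sum.inr j) = X (Sum.inl j) (Sum.inl i)) ∧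
    (∀ i j, X (Sum.inl i) (Sum.inr j) = X (Sum.inl j) (Sum.inr i)) ∧
    (∀ i j, X (Sum.inr i) (Sum.inl j) = - X (Sum.inr j) (Sum.inl i))}
  zero_mem' := by refine ⟨?_, ?_, ?_⟩ <;> intro i j <;> simp
  add_mem' := by
    rintro a b ⟨ha1, ha2, ha3⟩ ⟨hb1, hb2, hb3⟩
    refine ⟨?_, ?_, ?_⟩ <;> intro i j <;>
      simp only [Matrix.add_apply, ha1 i j, ha2 i j, ha3 i j, hb1 i j, hb2 i j, hb3 i j] <;>
      ring
  smul_mem' := by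
    rintro c a ⟨ha1, ha2, ha3⟩
    refine ⟨?_, ?_, ?_⟩ <;> intro i j <;>
      simp only [Matrix.smul_apply, ha1 i j, ha2 i j, ha3 i j, smul_neg]


theorem oddPart_fromBlocks {n m : ℕ} (A : Matrix (Fin n) (Fin n) F) (B : Matrix (Fin n) (Fin m) F)
    (C : Matrix (Fin m) (Fin n) F) (D : Matrix (Fin m) (Fin m) F) :
    oddPart F (fromBlocks A B C D) = fromBlocks 0 B C 0 := by
  ext i j
  rcases i with i | i <;> rcases j with j | j <;> simp [oddPart, pty]

theorem blk_sub {n m : ℕ} (A A' : Matrix (Fin n) (Fin n) F) (B B' : Matrix (Fin n) (Fin m) F)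
    (C C' : Matrix (Fin m) (Fin n) F) (D D' : Matrix (Fin m) (Fin m) F) :
    fromBlocks A B C D - fromBlocks A' B' C' D' =
      fromBlocks (A - A') (B - B') (C - C') (D - D') := by
  ext i j
  rcases i with i | i <;> rcases j with j | j <;> rfl

theorem mem_even_fromBlocks {n m : ℕ} (A : Matrix (Fin n) (Fin n) F) (B : Matrix (Fin n) (Fin m) F)
    (C : Matrix (Fin m) (Fin n) F) (D : Matrix (Fin m) (Fin m) F) :
    fromBlocks A B C D ∈ evenSub F n m ↔ B = 0 ∧ C = 0 := by
  constructor
  · intro h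
    constructor
    · ext i j
      exact h (Sum.inl i) (Sum.inr j) (by simp [pty])
    · ext i j
      exact h (Sum.inr i) (Sum.inl j) (by simp [pty])
  · rintro ⟨rfl, rfl⟩ i j h
    rcases i with i | i <;> rcases j with j | j <;> simp_all [pty]

theorem mem_odd_fromBlocks {n m : ℕ} (A : Matrix (Fin n) (Fin n) F) (B : Matrix (Fin n) (Fin m) F)
    (C : Matrix (Fin m) (Fin n) F) (D : Matrix (Fin m) (Fin m) F) :
    fromBlocks A B C D ∈ oddSub F n m ↔ A = 0 ∧ D = 0 := by
  constructor
  · intro h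
    constructor
    · ext i j
      exact h (Sum.inl i) (Sum.inl j) (by simp [pty])
    · ext i j
      exact h (Sum.inr i) (Sum.inr j) (by simp [pty])
  · rintro ⟨rfl, rfl⟩ i j h
    rcases i with i | i <;> rcases j with j | j <;> simp_all [pty]

/-- The parity-swapping embedding. -/
def emb {n m r : ℕ} (P : Matrix (Fin m) (Fin r) F) (Q : Matrix (Fin r) (Fin m) F) :
    MJ F r n →ₗ[F] MJ F n m where
  toFun X := fromBlocks X.toBlocks₂₂ (X.toBlocks₂₁ * Q) (P * X.toBlocks₁₂) (P * X.toBlocks₁₁ * Q)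
  map_add' X Y := by
    have e11 : (X + Y).toBlocks₁₁ = X.toBlocks₁₁ + Y.toBlocks₁₁ := rfl
    have e12 : (X + Y).toBlocks₁₂ = X.toBlocks₁₂ + Y.toBlocks₁₂ := rfl
    have e21 : (X + Y).toBlocks₂₁ = X.toBlocks₂₁ + Y.toBlocks₂₁ := rfl
    have e22 : (X + Y).toBlocks₂₂ = X.toBlocks₂₂ + Y.toBlocks₂₂ := rfl
    simp only [e11, e12, e21, e22, fromBlocks_add, Matrix.mul_add, Matrix.add_mul]
  map_smul' c X := by
    have e11 : (c • X).toBlocks₁₁ = c • X.toBlocks₁₁ := rfl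
    have e12 : (c • X).toBlocks₁₂ = c • X.toBlocks₁₂ := rfl
    have e21 : (c • X).toBlocks₂₁ = c • X.toBlocks₂₁ := rfl
    have e22 : (c • X).toBlocks₂₂ = c • X.toBlocks₂₂ := rfl
    simp only [e11, e12, e21, e22, fromBlocks_smul, Matrix.mul_smul, Matrix.smul_mul,
      RingHom.id_apply]

section
variable {F}
variable {n m r : ℕ} (P : Matrix (Fin m) (Fin r) F) (Q : Matrix (Fin r) (Fin m) F)

theorem emb_fromBlocks (A : Matrix (Fin r) (Fin r) F) (B : Matrix (Fin r) (Fin n) F)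
    (C : Matrix (Fin n) (Fin r) F) (D : Matrix (Fin n) (Fin n) F) :
    emb F P Q (fromBlocks A B C D) = fromBlocks D (C * Q) (P * B) (P * A * Q) := rfl

theorem emb_mul (h : Q * P = 1) (X Y : MJ F r n) :
    emb F P Q (X * Y) = emb F P Q X * emb F P Q Y := by
  rw [← fromBlocks_toBlocks X, ← fromBlocks_toBlocks Y]
  generalize X.toBlocks₁₁ = A
  generalize X.toBlocks₁₂ = B
  generalize X.toBlocks₂₁ = C
  generalize X.toBlocks₂₂ = D
  generalize Y.toBlocks₁₁ = A'
  generalize Y.toBlocks₁₂ = B'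
  generalize Y.toBlocks₂₁ = C'
  generalize Y.toBlocks₂₂ = D'
  have hh : ∀ {l : ℕ} (Z : Matrix (Fin r) (Fin l) F), Q * (P * Z) = Z := by
    intro l Z
    rw [← Matrix.mul_assoc, h, Matrix.one_mul]
  simp only [emb_fromBlocks, fromBlocks_multiply, Matrix.mul_assoc, hh, Matrix.mul_add,
    Matrix.add_mul]
  rw [add_comm (C * B'), add_comm (C * (A' * Q)), add_comm (P * (A * B')),
    add_comm (P * (A * (A' * Q)))]

theorem emb_odd (X : MJ F r n) : emb F P Q (oddPart F X) = oddPart F (emb F P Q X) := by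
  rw [← fromBlocks_toBlocks X]
  simp [emb_fromBlocks, oddPart_fromBlocks]

theorem emb_jmul (h : Q * P = 1) (X Y : MJ F r n) :
    emb F P Q (jmul X Y) = jmul (emb F P Q X) (emb F P Q Y) := by
  simp only [jmul, map_sub, map_smul, map_add, emb_mul P Q h, emb_odd]

theorem cancelP (h : Q * P = 1) {l : ℕ} (B : Matrix (Fin r) (Fin l) F) (hB : P * B = 0) :
    B = 0 := by
  rw [← Matrix.one_mul B, ← h, Matrix.mul_assoc, hB, Matrix.mul_zero]

theorem cancelQ (h : Q * P = 1) {l : ℕ} (B : Matrix (Fin l) (Fin r) F) (hB : B * Q = 0) :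
    B = 0 := by
  rw [← Matrix.mul_one B, ← h, ← Matrix.mul_assoc, hB, Matrix.zero_mul]

theorem emb_inj (h : Q * P = 1) : Function.Injective (emb F (n := n) P Q) := by
  rw [← LinearMap.ker_eq_bot, LinearMap.ker_eq_bot']
  intro X hX
  rw [← fromBlocks_toBlocks X] at hX ⊢
  rw [emb_fromBlocks, ← fromBlocks_zero, fromBlocks_inj] at hX
  obtain ⟨h1, h2, h3, h4⟩ := hX
  rw [h1, cancelQ P Q h _ h2, cancelP P Q h _ h3, cancelP P Q h _ (cancelQ P Q h _ h4),
    fromBlocks_zero]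

theorem emb_even_iff (h : Q * P = 1) (X : MJ F r n) :
    emb F P Q X ∈ evenSub F n m ↔ X ∈ evenSub F r n := by
  rw [← fromBlocks_toBlocks X, emb_fromBlocks, mem_even_fromBlocks, mem_even_fromBlocks]
  constructor
  · rintro ⟨h1, h2⟩
    exact ⟨cancelP P Q h _ h2, cancelQ P Q h _ h1⟩
  · rintro ⟨h1, h2⟩
    simp [h1, h2]

theorem emb_odd_iff (h : Q * P = 1) (X : MJ F r n) :
    emb F P Q X ∈ oddSub F n m ↔ X ∈ oddSub F r n := by
  rw [← fromBlocks_toBlocks X, emb_fromBlocks, mem_odd_fromBlocks, mem_odd_fromBlocks]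
  constructor
  · rintro ⟨h1, h2⟩
    exact ⟨cancelP P Q h _ (cancelQ P Q h _ h2), h1⟩
  · rintro ⟨h1, h2⟩
    simp [h1, h2]

theorem emb_subalg (h : Q * P = 1) (C : Submodule F (MJ F r n)) (hC : IsSubalg F C) :
    IsSubalg F (C.map (emb F P Q)) := by
  obtain ⟨hg, hm⟩ := hC
  constructor
  · apply le_antisymm
    · rintro _ ⟨X, hX, rfl⟩
      rw [SetLike.mem_coe, hg] at hX
      obtain ⟨Y, hY, Z, hZ, rfl⟩ := Submodule.mem_sup.1 hX
      rw [map_add]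
      exact Submodule.add_mem_sup
        ⟨Submodule.mem_map_of_mem hY.1, (emb_even_iff P Q h Y).2 hY.2⟩
        ⟨Submodule.mem_map_of_mem hZ.1, (emb_odd_iff P Q h Z).2 hZ.2⟩
    · exact sup_le inf_le_left inf_le_left
  · rintro _ ⟨X, hX, rfl⟩ _ ⟨Y, hY, rfl⟩
    exact ⟨jmul X Y, hm X hX Y hY, emb_jmul P Q h X Y⟩

theorem emb_iso (h : Q * P = 1) (C : Submodule F (MJ F r n)) :
    SuperIso F (C.map (emb F P Q)) C := by
  let e := C.equivMapOfInjective (emb F P Q) (emb_inj P Q h)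
  have he : ∀ x : C.map (emb F P Q), (x : MJ F n m) = emb F P Q (e.symm x : MJ F r n) := by
    intro x
    conv_lhs => rw [← e.apply_symm_apply x]
    rfl
  refine ⟨e.symm, ?_, ?_, ?_⟩
  · intro x
    rw [he x, emb_even_iff P Q h]
  · intro x
    rw [he x, emb_odd_iff P Q h]
  · intro x y z hxy
    rw [he x, he y, he z, ← emb_jmul P Q h] at hxy
    exact emb_inj P Q h hxy

end

theorem graded_of_odd {n m : ℕ} (A : Submodule F (MJ F n m)) (h : ∀ x ∈ A, oddPart F x ∈ A) :
    IsGraded F A := by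
  apply le_antisymm
  · intro x hx
    have h1 := h x hx
    rw [← sub_add_cancel x (oddPart F x)]
    refine Submodule.add_mem_sup ⟨A.sub_mem hx h1, ?_⟩ ⟨h1, ?_⟩
    · intro i j hij
      simp [oddPart, hij]
    · intro i j hij
      simp [oddPart, hij]
  · exact sup_le inf_le_left inf_le_left

theorem top_subalg {n m : ℕ} : IsSubalg F (⊤ : Submodule F (MJ F n m)) :=
  ⟨graded_of_odd F _ (fun _ _ => trivial), fun _ _ _ _ => trivial⟩

theorem SMat_transpose (q : ℕ) : (SMat F q)ᵀ = - SMat F q := by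
  ext i j
  have := i.2
  have := j.2
  simp only [SMat, transpose_apply, of_apply, Matrix.neg_apply]
  split_ifs <;> first | omega | simp

theorem SMat_sq (q : ℕ) : SMat F q * SMat F q = -1 := by
  ext i j
  have hi := i.2
  have hj := j.2
  rw [Matrix.mul_apply]
  by_cases hiq : (i : ℕ) < q
  · rw [Finset.sum_eq_single (⟨i + q, by omega⟩ : Fin (2 * q))]
    · simp only [SMat, of_apply, Matrix.neg_apply, Matrix.one_apply, Fin.ext_iff]
      split_ifs <;> first | omega | simp
    · intro b _ hb
      have hb2 := b.2
      simp only [ne_eq, Fin.ext_iff] at hb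
      simp only [SMat, of_apply]
      split_ifs <;> first | omega | simp
    · simp
  · rw [Finset.sum_eq_single (⟨i - q, by omega⟩ : Fin (2 * q))]
    · simp only [SMat, of_apply, Matrix.neg_apply, Matrix.one_apply, Fin.ext_iff]
      split_ifs <;> first | omega | simp
    · intro b _ hb
      have hb2 := b.2
      simp only [ne_eq, Fin.ext_iff] at hb
      simp only [SMat, of_apply]
      split_ifs <;> first | omega | simp
    · simp

theorem mem_osp_fromBlocks {p q : ℕ} (A : Matrix (Fin p) (Fin p) F)
    (B : Matrix (Fin p) (Fin (2 * q)) F)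
    (C : Matrix (Fin (2 * q)) (Fin p) F) (D : Matrix (Fin (2 * q)) (Fin (2 * q)) F) :
    fromBlocks A B C D ∈ ospSub F p q ↔
      Aᵀ = A ∧ SMat F q * C = Bᵀ ∧ Dᵀ * SMat F q = SMat F q * D := Iff.rfl

theorem osp_subalg [CharZero F] (p q : ℕ) : IsSubalg F (ospSub F p q) := by
  constructor
  · apply graded_of_odd
    intro X hX
    rw [← fromBlocks_toBlocks X] at hX ⊢
    rw [mem_osp_fromBlocks] at hX
    rw [oddPart_fromBlocks, mem_osp_fromBlocks]
    exact ⟨by simp, hX.2.1, by simp⟩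
  · intro X hX Y hY
    rw [← fromBlocks_toBlocks X] at hX ⊢
    rw [← fromBlocks_toBlocks Y] at hY ⊢
    generalize X.toBlocks₁₁ = A at *
    generalize X.toBlocks₁₂ = C at *
    generalize X.toBlocks₂₁ = E at *
    generalize X.toBlocks₂₂ = D at *
    generalize Y.toBlocks₁₁ = A' at *
    generalize Y.toBlocks₁₂ = C' at *
    generalize Y.toBlocks₂₁ = E' at *
    generalize Y.toBlocks₂₂ = D' at *
    rw [mem_osp_fromBlocks] at hX hY
    obtain ⟨hA, hE, hD⟩ := hX
    obtain ⟨hA', hE', hD'⟩ := hY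
    have hS := SMat_transpose F q
    simp only [jmul, oddPart_fromBlocks, fromBlocks_multiply, fromBlocks_add, fromBlocks_smul,
      blk_sub, mem_osp_fromBlocks]
    generalize SMat F q = S at *
    have hC : C = - (Eᵀ * S) := by
      rw [← transpose_transpose C, ← hE, transpose_mul, hS, Matrix.mul_neg]
    have hC' : C' = - (E'ᵀ * S) := by
      rw [← transpose_transpose C', ← hE', transpose_mul, hS, Matrix.mul_neg]
    subst hC hC'
    clear hE hE'
    have hDm : ∀ {l : ℕ} (Z : Matrix (Fin (2 * q)) (Fin l) F), Dᵀ * (S * Z) = S * (D * Z) := by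
      intro l Z
      rw [← Matrix.mul_assoc, hD, Matrix.mul_assoc]
    have hDm' : ∀ {l : ℕ} (Z : Matrix (Fin (2 * q)) (Fin l) F),
        D'ᵀ * (S * Z) = S * (D' * Z) := by
      intro l Z
      rw [← Matrix.mul_assoc, hD', Matrix.mul_assoc]
    have h2 : (2 : F)⁻¹ + (2 : F)⁻¹ = 1 := by
      rw [← two_mul]
      exact mul_inv_cancel₀ two_ne_zero
    have hs : ∀ {a b : ℕ} (Z : Matrix (Fin a) (Fin b) F),
        Z = (2 : F)⁻¹ • Z + (2 : F)⁻¹ • Z := by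
      intro a b Z
      rw [← add_smul, h2, one_smul]
    refine ⟨?_, ?_, ?_⟩
    · rw [hs (0 * 0 + -(E'ᵀ * S) * E)]
      simp only [transpose_add, transpose_sub, transpose_smul, transpose_mul, transpose_neg, hA,
        hA', hS, transpose_transpose, Matrix.mul_assoc, Matrix.neg_mul, Matrix.mul_neg,
        smul_add, smul_neg, neg_neg, Matrix.mul_zero, zero_add, transpose_zero]
      abel
    · simp only [transpose_add, transpose_sub, transpose_smul, transpose_mul, transpose_neg, hA,
        hA', hS, transpose_transpose, Matrix.mul_assoc, Matrix.neg_mul, Matrix.mul_neg,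
        smul_add, smul_neg, neg_neg, Matrix.mul_zero, Matrix.zero_mul, zero_add, add_zero,
        transpose_zero, Matrix.mul_add, Matrix.mul_sub, Matrix.mul_smul, hDm, hDm', sub_zero]
      abel
    · rw [hs (E' * -(Eᵀ * S) + 0 * 0)]
      simp only [transpose_add, transpose_sub, transpose_smul, transpose_mul, transpose_neg, hA,
        hA', hS, transpose_transpose, Matrix.mul_assoc, Matrix.neg_mul, Matrix.mul_neg,
        smul_add, smul_neg, neg_neg, Matrix.mul_zero, Matrix.zero_mul, zero_add, add_zero,
        transpose_zero, Matrix.mul_add, Matrix.mul_sub, Matrix.mul_smul, hDm, hDm', sub_zero,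
        Matrix.add_mul, Matrix.sub_mul, Matrix.smul_mul, hD, hD']
      abel

def Pm (k : ℕ) : Matrix (Fin (k + 2)) (Fin (k + 1)) F :=
  Matrix.of fun i j => Fin.cases (if j = 0 then -1 else 0) (fun i' => if i' = j then 1 else 0) i

def Qm (k : ℕ) : Matrix (Fin (k + 1)) (Fin (k + 2)) F :=
  Matrix.of fun j i => Fin.cases 0 (fun i' => if i' = j then 1 else 0) i

theorem Pm_zero {k l : ℕ} (C : Matrix (Fin (k + 1)) (Fin l) F) (j : Fin l) :
    (Pm F k * C) 0 j = - C 0 j := by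
  simp [Matrix.mul_apply, Pm]

theorem Pm_succ {k l : ℕ} (C : Matrix (Fin (k + 1)) (Fin l) F) (i : Fin (k + 1)) (j : Fin l) :
    (Pm F k * C) i.succ j = C i j := by
  simp [Matrix.mul_apply, Pm]

theorem Qm_zero {k l : ℕ} (C : Matrix (Fin l) (Fin (k + 1)) F) (j : Fin l) :
    (C * Qm F k) j 0 = 0 := by
  simp [Matrix.mul_apply, Qm]

theorem Qm_succ {k l : ℕ} (C : Matrix (Fin l) (Fin (k + 1)) F) (i : Fin (k + 1)) (j : Fin l) :
    (C * Qm F k) j i.succ = C j i := by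
  simp [Matrix.mul_apply, Qm]

theorem QP_one (k : ℕ) : Qm F k * Pm F k = 1 := by
  ext i j
  rw [Matrix.mul_apply, Fin.sum_univ_succ]
  simp [Pm, Qm, Matrix.one_apply, eq_comm]

def tailR {k l : ℕ} (Z : Matrix (Fin (k + 1)) (Fin l) F) : Matrix (Fin k) (Fin l) F :=
  Matrix.of fun i j => Z i.succ j

def tailC {k l : ℕ} (Z : Matrix (Fin l) (Fin (k + 1)) F) : Matrix (Fin l) (Fin k) F :=
  Matrix.of fun i j => Z i j.succ

theorem factP {k l : ℕ} (Z : Matrix (Fin (k + 2)) (Fin l) F) (h : ∀ j, Z 0 j + Z 1 j = 0) :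
    Pm F k * tailR F Z = Z := by
  ext i j
  refine Fin.cases ?_ (fun i => ?_) i
  · rw [Pm_zero]
    have := h j
    have e : tailR F Z 0 j = Z 1 j := rfl
    rw [e]
    linear_combination -this
  · rw [Pm_succ]; rfl

theorem factQ {k l : ℕ} (Z : Matrix (Fin l) (Fin (k + 2)) F) (h : ∀ j, Z j 0 = 0) :
    tailC F Z * Qm F k = Z := by
  ext j i
  refine Fin.cases ?_ (fun i => ?_) i
  · rw [Qm_zero, h]
  · rw [Qm_succ]; rfl

theorem existsA {k : ℕ} (Y : Matrix (Fin (k + 2)) (Fin (k + 2)) F) :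
    ∃ A : Matrix (Fin (k + 2)) (Fin (k + 2)) F, Aᵀ = A ∧ (∀ i, A i 0 = Y i 0) ∧
      ∀ j, A 0 j + A 1 j = Y 0 j + Y 1 j := by
  refine ⟨Matrix.of fun i j => if j = 0 then Y i 0 else if i = 0 then Y j 0 else
    if j = 1 then Y 0 i + Y 1 i - Y i 0 else if i = 1 then Y 0 j + Y 1 j - Y j 0 else 0,
    ?_, ?_, ?_⟩
  · ext i j
    simp only [transpose_apply, of_apply]
    split_ifs <;> simp_all
  · intro i
    simp
  · intro j
    simp only [of_apply]
    split_ifs <;> simp_all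

theorem existsE {k q : ℕ} (Y : Matrix (Fin (2 * q)) (Fin (k + 2)) F)
    (Y' : Matrix (Fin (k + 2)) (Fin (2 * q)) F) :
    ∃ E : Matrix (Fin (2 * q)) (Fin (k + 2)) F, (∀ i, E i 0 = Y i 0) ∧
      ∀ j, (SMat F q * E)ᵀ 0 j + (SMat F q * E)ᵀ 1 j = Y' 0 j + Y' 1 j := by
  let v : Fin (2 * q) → F := fun i => Y i 0
  let u : Fin (2 * q) → F := fun j => Y' 0 j + Y' 1 j
  let w : Fin (2 * q) → F := - (SMat F q *ᵥ (u - SMat F q *ᵥ v))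
  refine ⟨Matrix.of fun i j => if j = 0 then v i else if j = 1 then w i else 0, ?_, ?_⟩
  · intro i
    simp [v]
  · intro j
    have h0 : SMat F q *ᵥ v + SMat F q *ᵥ w = u := by
      simp only [w, mulVec_neg, mulVec_mulVec, SMat_sq, neg_mulVec, one_mulVec]
      abel
    have := congrFun h0 j
    simpa [Matrix.mul_apply, mulVec, dotProduct, u] using this

/-- for `m ≥ 2` and even `n = 2q`, there exist subsuperalgebras `A, B` of
`M_{n,m}(F)^{(+)}` with `A ≅ osp(m, n/2)`, `B ≅ M_{m−1,n}(F)^{(+)}` and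
`M_{n,m}(F)^{(+)} = A + B`. -/
theorem osp_plus_Mm1n_decomposition
    (F : Type*) [Field F] [CharZero F]
    (m q : ℕ) (hm : 2 ≤ m) (hq : 1 ≤ q) :
    ∃ A B : Submodule F (MJ F (2 * q) m),
      IsSubalg F A ∧ IsSubalg F B ∧
      SuperIso F A (ospSub F m q) ∧
      SuperIso F B (⊤ : Submodule F (MJ F (m - 1) (2 * q))) ∧
      A ⊔ B = ⊤ := by
  obtain ⟨k, rfl⟩ : ∃ k, m = k + 2 := ⟨m - 2, by omega⟩
  have h1 : (1 : Matrix (Fin (k + 2)) (Fin (k + 2)) F) * 1 = 1 := Matrix.one_mul 1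
  refine ⟨(ospSub F (k + 2) q).map (emb F 1 1),
    (⊤ : Submodule F (MJ F (k + 1) (2 * q))).map (emb F (Pm F k) (Qm F k)),
    emb_subalg _ _ h1 _ (osp_subalg F _ _), emb_subalg _ _ (QP_one F k) _ (top_subalg F),
    emb_iso _ _ h1 _, emb_iso _ _ (QP_one F k) _, ?_⟩
  rw [eq_top_iff]
  intro Y _
  obtain ⟨A, hA1, hA2, hA3⟩ := existsA F Y.toBlocks₂₂
  obtain ⟨E, hE1, hE2⟩ := existsE F Y.toBlocks₁₂ Y.toBlocks₂₁
  refine Submodule.mem_sup.2 ⟨emb F 1 1 (fromBlocks A (SMat F q * E)ᵀ E 0),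
    Submodule.mem_map_of_mem ((mem_osp_fromBlocks F _ _ _ _).2 ⟨hA1, by simp, by simp⟩),
    Y - emb F 1 1 (fromBlocks A (SMat F q * E)ᵀ E 0), ?_, by simp⟩
  have f1 := factQ F (Y.toBlocks₁₂ - E) (by intro j; simp [hE1])
  have f2 := factP F (Y.toBlocks₂₁ - (SMat F q * E)ᵀ) (by
    intro j
    have := hE2 j
    simp only [Matrix.sub_apply]
    linear_combination -this)
  have f3 := factQ F (Y.toBlocks₂₂ - A) (by intro j; simp [hA2])
  have f4 := factP F (tailC F (Y.toBlocks₂₂ - A)) (by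
    intro j
    have := hA3 j.succ
    simp only [tailC, Matrix.sub_apply, of_apply]
    linear_combination -this)
  refine ⟨fromBlocks (tailR F (tailC F (Y.toBlocks₂₂ - A)))
    (tailR F (Y.toBlocks₂₁ - (SMat F q * E)ᵀ))
    (tailC F (Y.toBlocks₁₂ - E)) Y.toBlocks₁₁, trivial, ?_⟩
  rw [emb_fromBlocks, emb_fromBlocks, f1, f2, f4, f3]
  conv_rhs => rw [← fromBlocks_toBlocks Y]
  simp [blk_sub]

end SJ
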